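/- For every x ∈ ℝ, the new 6-point kernel satisfies the third moment condition: ∑_{j∈ℤ} (x − j)³·φ(x − j) = 0. -/

import Mathlib

noncomputable section

namespace IB6

/-- The special second-moment constant `K = 59/60 − √29/20`. -/
def K : ℝ := 59 / 60 - Real.sqrt 29 / 20

/-- `α = 28`. -/
def a : ℝ := 28

/-- `β(r)`. -/
def b (r : ℝ) : ℝ :=
  9 / 4 - (3 / 2) * (K + r ^ 2) * r + (22 / 3 - 7 * K) * r - (7 / 3) * r ^ 3

/-- `γ(r)`. -/
def c (r : ℝ) : ℝ :=
  -(11 / 32) * r ^ 2 + (3 / 32) * (2 * K + r ^ 2) * r ^ 2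
    + (1 / 72) * ((3 * K - 1) * r + r ^ 3) ^ 2
    + (1 / 18) * ((4 - 3 * K) * r - r ^ 3) ^ 2

/-- `p₋₃(r) = (−β(r) + √(β(r)² − 4αγ(r)))/(2α)`. -/
def pm3 (r : ℝ) : ℝ := (-b r + Real.sqrt (b r ^ 2 - 4 * a * c r)) / (2 * a)

/-- `p₋₂(r)`. -/
def pm2 (r : ℝ) : ℝ :=
  -3 * pm3 r - 1 / 16 + (K + r ^ 2) / 8 + (3 * K - 1) * r / 12 + r ^ 3 / 12

/-- `p₋₁(r)`. -/
def pm1 (r : ℝ) : ℝ := 2 * pm3 r + 1 / 4 + (4 - 3 * K) * r / 6 - r ^ 3 / 6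

/-- `p₀(r)`. -/
def p0 (r : ℝ) : ℝ := 2 * pm3 r + 5 / 8 - (K + r ^ 2) / 4

/-- `p₁(r)`. -/
def p1 (r : ℝ) : ℝ := -3 * pm3 r + 1 / 4 - (4 - 3 * K) * r / 6 + r ^ 3 / 6

/-- `p₂(r)`. -/
def p2 (r : ℝ) : ℝ :=
  pm3 r - 1 / 16 + (K + r ^ 2) / 8 - (3 * K - 1) * r / 12 - r ^ 3 / 12

/-- The new 6-point immersed-boundary kernel `φ`. -/
def phi (x : ℝ) : ℝ :=
  if -3 ≤ x ∧ x < -2 then pm3 (x - (-3))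
  else if -2 ≤ x ∧ x < -1 then pm2 (x - (-2))
  else if -1 ≤ x ∧ x < 0 then pm1 (x - (-1))
  else if 0 ≤ x ∧ x < 1 then p0 (x - 0)
  else if 1 ≤ x ∧ x < 2 then p1 (x - 1)
  else if 2 ≤ x ∧ x < 3 then p2 (x - 2)
  else 0

/-!
The `ℤ`-translates of `x` are the points `fract x + k`, and `φ` sees only `k = -3, …, 2`, so every
moment of `φ` at `x` is a weighted sum of `p₋₃, …, p₂` at `r = fract x`. The free parameter `p₋₃`
enters these with coefficients `1, -3, 2, 2, -3, 1`, those of `(z - 1)⁴ (z + 1)`; this stencil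
annihilates cubics, so the third moment does not depend on the choice of root defining `p₋₃`.
The remaining terms are polynomials in `r` and `K` whose third moments cancel.
-/

section IntTranslates

variable {R M : Type*} [Ring R] [LinearOrder R] [FloorRing R] [AddCommMonoid M]
  [TopologicalSpace M]

theorem tsum_sub_intCast_eq_tsum_fract_add (f : R → M) (x : R) :
    ∑' j : ℤ, f (x - j) = ∑' k : ℤ, f (Int.fract x + k) := by
  rw [← (Equiv.subLeft ⌊x⌋).tsum_eq]
  refine tsum_congr fun k => congrArg f ?_
  rw [Equiv.subLeft_apply, Int.cast_sub, Int.fract, sub_sub_eq_add_sub, sub_add_eq_add_sub]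

variable [IsStrictOrderedRing R]

theorem fract_add_intCast_mem_Ico_iff {x : R} {k m n : ℤ} :
    Int.fract x + k ∈ Set.Ico (m : R) n ↔ k ∈ Finset.Ico m n := by
  have hfloor : ⌊Int.fract x + k⌋ = k := by rw [Int.floor_add_intCast, Int.floor_fract, zero_add]
  rw [Set.mem_Ico, Finset.mem_Ico, ← Int.le_floor, ← Int.floor_lt, hfloor]

theorem tsum_sub_intCast_eq_sum_Ico {f : R → M} {m n : ℤ}
    (hf : Function.support f ⊆ Set.Ico (m : R) n) (x : R) :
    ∑' j : ℤ, f (x - j) = ∑ k ∈ Finset.Ico m n, f (Int.fract x + k) := by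
  rw [tsum_sub_intCast_eq_tsum_fract_add]
  refine tsum_eq_sum fun k hk => ?_
  exact Function.support_subset_iff'.mp hf _ (mt fract_add_intCast_mem_Ico_iff.mp hk)

end IntTranslates

theorem support_phi_subset : Function.support phi ⊆ Set.Ico (-3) 3 := by
  refine Function.support_subset_iff'.mpr fun y hy => ?_
  grind [phi]

theorem phi_sub_three {r : ℝ} (hr : r ∈ Set.Ico (0 : ℝ) 1) : phi (r - 3) = pm3 r := by
  grind [phi]

theorem phi_sub_two {r : ℝ} (hr : r ∈ Set.Ico (0 : ℝ) 1) : phi (r - 2) = pm2 r := by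
  grind [phi]

theorem phi_sub_one {r : ℝ} (hr : r ∈ Set.Ico (0 : ℝ) 1) : phi (r - 1) = pm1 r := by
  grind [phi]

theorem phi_eq_p0 {r : ℝ} (hr : r ∈ Set.Ico (0 : ℝ) 1) : phi r = p0 r := by
  grind [phi]

theorem phi_add_one {r : ℝ} (hr : r ∈ Set.Ico (0 : ℝ) 1) : phi (r + 1) = p1 r := by
  grind [phi]

theorem phi_add_two {r : ℝ} (hr : r ∈ Set.Ico (0 : ℝ) 1) : phi (r + 2) = p2 r := by
  grind [phi]

theorem tsum_mul_phi_sub_intCast (w : ℝ → ℝ) (x : ℝ) :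
    ∑' j : ℤ, w (x - j) * phi (x - j) =
      w (Int.fract x - 3) * pm3 (Int.fract x) + w (Int.fract x - 2) * pm2 (Int.fract x)
        + w (Int.fract x - 1) * pm1 (Int.fract x) + w (Int.fract x) * p0 (Int.fract x)
        + w (Int.fract x + 1) * p1 (Int.fract x) + w (Int.fract x + 2) * p2 (Int.fract x) := by
  have hr : Int.fract x ∈ Set.Ico (0 : ℝ) 1 := ⟨Int.fract_nonneg x, Int.fract_lt_one x⟩
  have hsupp : Function.support (fun y => w y * phi y) ⊆ Set.Ico ((-3 : ℤ) : ℝ) (3 : ℤ) := by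
    push_cast
    exact (Function.support_mul_subset_right w phi).trans support_phi_subset
  have hIco : Finset.Ico (-3 : ℤ) 3 = {-3, -2, -1, 0, 1, 2} := by decide
  rw [tsum_sub_intCast_eq_sum_Ico hsupp x, hIco, ← phi_sub_three hr, ← phi_sub_two hr,
    ← phi_sub_one hr, ← phi_eq_p0 hr, ← phi_add_one hr, ← phi_add_two hr]
  simp [← sub_eq_add_neg, add_assoc]

theorem third_moment_stencil_eq_zero {R : Type*} [CommRing R] (r : R) :
    (r - 3) ^ 3 - 3 * (r - 2) ^ 3 + 2 * (r - 1) ^ 3 + 2 * r ^ 3 - 3 * (r + 1) ^ 3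
      + (r + 2) ^ 3 = 0 := by
  ring

theorem third_moment_pieces_eq_zero (r : ℝ) :
    (r - 3) ^ 3 * pm3 r + (r - 2) ^ 3 * pm2 r + (r - 1) ^ 3 * pm1 r + r ^ 3 * p0 r
      + (r + 1) ^ 3 * p1 r + (r + 2) ^ 3 * p2 r = 0 :=
  calc
    _ = pm3 r * ((r - 3) ^ 3 - 3 * (r - 2) ^ 3 + 2 * (r - 1) ^ 3 + 2 * r ^ 3 - 3 * (r + 1) ^ 3
          + (r + 2) ^ 3) := by
      simp only [pm2, pm1, p0, p1, p2]
      ring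
    _ = 0 := by rw [third_moment_stencil_eq_zero, mul_zero]

/-- Third moment condition: `∑_{j∈ℤ} (x − j)³·φ(x − j) = 0` for all `x`. -/
theorem new6pt_third_moment (x : ℝ) : ∑' j : ℤ, (x - j) ^ 3 * phi (x - j) = 0 := by
  rw [tsum_mul_phi_sub_intCast (· ^ 3)]
  exact third_moment_pieces_eq_zero (Int.fract x)

end IB6
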